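/- Feasibility under "box ∩ polyhedral" uncertainty, Case II (sufficiency direction of Theorem 4.5, Case II): let δ_B, δ_P > 0 with δ_P ≤ n δ_B. If there exists λ ≥ 0 such that A − λ B⁽ᴾ⁾ is positive semidefinite, then for all ζ ∈ ℝⁿ with ‖ζ‖_∞ ≤ δ_B and ‖ζ‖₁ ≤ δ_P one has ((δ_P μ⁽⁰⁾ + Σ_{j=1}^n ζⱼ μ⁽ʲ⁾)ᵀ x)² ≥ τ² δ_P². -/

import Mathlib

open Matrix

noncomputable section

/-- `a j = (μ⁽ʲ⁾)ᵀ x`, the dot product of the `j`-th expected-return vector with `x`. -/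
def avec (n : ℕ) (x : Fin n → ℝ) (μ : Fin (n + 1) → Fin n → ℝ) : Fin (n + 1) → ℝ :=
  fun j => μ j ⬝ᵥ x

/-- The symmetric matrix `A = a aᵀ - τ² e₀ e₀ᵀ`. -/
def Amat (n : ℕ) (x : Fin n → ℝ) (τ : ℝ) (μ : Fin (n + 1) → Fin n → ℝ) :
    Matrix (Fin (n + 1)) (Fin (n + 1)) ℝ :=
  Matrix.of fun i j =>
    avec n x μ i * avec n x μ j - if i = 0 ∧ j = 0 then τ ^ 2 else 0

/-- The matrix `B⁽ᴱ⁾ = diag(1, -1, …, -1)`. -/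
def BE (n : ℕ) : Matrix (Fin (n + 1)) (Fin (n + 1)) ℝ :=
  Matrix.diagonal fun i => if i = 0 then 1 else -1

/-- The matrix `B⁽ᴾ⁾ = e₀e₀ᵀ - J`: `(0,0)`-entry `1`, entries `-1` for `i, j ≥ 1`,
zero elsewhere. -/
def BP (n : ℕ) : Matrix (Fin (n + 1)) (Fin (n + 1)) ℝ :=
  Matrix.of fun i j =>
    if i = 0 ∧ j = 0 then 1 else if i ≠ 0 ∧ j ≠ 0 then -1 else 0

/-- A real matrix is positive semidefinite: `zᵀ M z ≥ 0` for all `z`. -/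
def IsPSD {d : ℕ} (M : Matrix (Fin d) (Fin d) ℝ) : Prop :=
  ∀ z : Fin d → ℝ, 0 ≤ z ⬝ᵥ M *ᵥ z

/-- **Theorem 4.5, Case II**, sufficiency direction ("box ∩ polyhedral" uncertainty with
`δ_P ≤ n δ_B`): if `A - λ B⁽ᴾ⁾ ⪰ 0` for some `λ ≥ 0`, then the robust constraint holds
on the intersection of the box and the polyhedron. -/
theorem feasibility_box_polyhedral_caseII (n : ℕ) (hn : 1 ≤ n) (x : Fin n → ℝ) (τ : ℝ)
    (μ : Fin (n + 1) → Fin n → ℝ) (δB δP : ℝ) (hδB : 0 < δB) (hδP : 0 < δP)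
    (hmin : δP ≤ (n : ℝ) * δB)
    (h : ∃ lam : ℝ, 0 ≤ lam ∧ IsPSD (Amat n x τ μ - lam • BP n)) :
    ∀ ζ : Fin n → ℝ, (∀ j, |ζ j| ≤ δB) → (∑ j, |ζ j|) ≤ δP →
      τ ^ 2 * δP ^ 2 ≤ ((δP • μ 0 + ∑ j : Fin n, ζ j • μ j.succ) ⬝ᵥ x) ^ 2 := by
  obtain ⟨lam, hlam, hpsd⟩ := h
  intro ζ _ hζ
  have hz := hpsd (Fin.cons δP ζ)
  have e : (δP • μ 0 + ∑ j : Fin n, ζ j • μ j.succ) ⬝ᵥ x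
      = δP * avec n x μ 0 + ∑ j : Fin n, ζ j * avec n x μ j.succ := by
    simp [avec, add_dotProduct, sum_dotProduct]
  have hS : (∑ j, ζ j) ^ 2 ≤ δP ^ 2 := by
    rw [sq_le_sq, abs_of_pos hδP]
    exact (Finset.abs_sum_le_sum_abs _ _).trans hζ
  have key : (Fin.cons δP ζ : Fin (n + 1) → ℝ) ⬝ᵥ
      (Amat n x τ μ - lam • BP n) *ᵥ (Fin.cons δP ζ : Fin (n + 1) → ℝ)
      = (δP * avec n x μ 0 + ∑ j : Fin n, ζ j * avec n x μ j.succ) ^ 2 - τ ^ 2 * δP ^ 2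
        - lam * (δP ^ 2 - (∑ j, ζ j) ^ 2) := by
    have h0 : ((Amat n x τ μ - lam • BP n) *ᵥ (Fin.cons δP ζ : Fin (n + 1) → ℝ)) 0
        = avec n x μ 0 * (δP * avec n x μ 0 + ∑ j : Fin n, ζ j * avec n x μ j.succ)
          - τ ^ 2 * δP - lam * δP := by
      simp only [mulVec, dotProduct, Fin.sum_univ_succ]
      simp [Amat, BP, Fin.succ_ne_zero]
      rw [mul_add, Finset.mul_sum]
      have : ∀ i : Fin n, avec n x μ 0 * avec n x μ i.succ * ζ i
          = avec n x μ 0 * (ζ i * avec n x μ i.succ) := fun i => by ring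
      simp only [this]
      ring
    have h1 : ∀ i : Fin n,
        ((Amat n x τ μ - lam • BP n) *ᵥ (Fin.cons δP ζ : Fin (n + 1) → ℝ)) i.succ
        = avec n x μ i.succ * (δP * avec n x μ 0 + ∑ j : Fin n, ζ j * avec n x μ j.succ)
          + lam * ∑ j, ζ j := by
      intro i
      simp only [mulVec, dotProduct, Fin.sum_univ_succ]
      simp [Amat, BP, Fin.succ_ne_zero]
      rw [mul_add, Finset.mul_sum, Finset.mul_sum, add_assoc, ← Finset.sum_add_distrib]
      congr 1
      · ring
      · exact Finset.sum_congr rfl fun j _ => by ring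
    rw [dotProduct, Fin.sum_univ_succ, h0]
    simp only [h1, Fin.cons_zero, Fin.cons_succ]
    generalize hT : δP * avec n x μ 0 + ∑ j : Fin n, ζ j * avec n x μ j.succ = T
    have h2 : ∑ i : Fin n, ζ i * (avec n x μ i.succ * T + lam * ∑ j, ζ j)
        = (∑ i : Fin n, ζ i * avec n x μ i.succ) * T + (∑ i, ζ i) * (lam * ∑ j, ζ j) := by
      rw [Finset.sum_mul, Finset.sum_mul, ← Finset.sum_add_distrib]
      exact Finset.sum_congr rfl fun j _ => by ring
    rw [h2]
    linear_combination T * hT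
  rw [key] at hz
  rw [e]
  nlinarith [mul_nonneg hlam (sub_nonneg.2 hS)]
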